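/- If 1 < p ≤ ∞, f ∈ h^p(B), and φ ∈ Möb(B), then the nontangential limit of f∘φ exists σ-a.e. on S and (f∘φ)*(ζ) = f*(φ(ζ)) for σ-almost every ζ ∈ S, where φ also denotes the extension of φ to the closed unit ball. -/

import Mathlib

/-!
A Möbius transformation `φ` of the ball is bi-Lipschitz on the closed ball, and this alone gives the
result. The intermediate maps of a composition of reflections may send points of the ball to `∞`, so
the estimate is carried out on the whole of `ℝ̂ⁿ` with the squared chordal distance
`|x - y|² / ((1 + |x|²)(1 + |y|²))`: each reflection distorts it by at most a constant factor
(`IsReflection.chord_le`), and so does every composition (`IsMobiusHat.chord_equiv`). On the closed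
ball the chordal and Euclidean distances are comparable, so `φ` is bi-Lipschitz there
(`IsMobiusBall.exists_bilipschitz`).

A bi-Lipschitz `φ` mapping `B` onto `B` maps `S` onto `S`, hence `1 - |φ x|`, the distance from
`φ x` to `S`, is comparable to `1 - |x|`. Consequently `φ` maps each approach region at `ζ` into an
approach region at `φ ζ` (`mapsTo_ntRegion`), which turns nontangential limits of `f` at `φ ζ` into
nontangential limits of `f ∘ φ` at `ζ`. Finally `φ⁻¹` is Lipschitz on `S`, so the preimage under `φ`
of a set of zero Hausdorff measure in `S` has zero Hausdorff measure (`hausdorff_preimage_null`).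
-/

open MeasureTheory Metric Set Filter
open scoped ENNReal NNReal Topology InnerProductSpace Classical

noncomputable section

/-- Euclidean space `ℝⁿ`. -/
abbrev Eucl (n : ℕ) := EuclideanSpace ℝ (Fin n)

/-- The open unit ball `B` in `ℝⁿ`. -/
def uBall (n : ℕ) : Set (Eucl n) := Metric.ball 0 1

/-- The unit sphere `S = ∂B` in `ℝⁿ`. -/
def uSphere (n : ℕ) : Set (Eucl n) := Metric.sphere 0 1

/-- The normalized surface area measure `σ` on the unit sphere (as a measure on `ℝⁿ`
supported on `S`), normalized so that `σ(S) = 1`. -/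
def sphMeasure (n : ℕ) : Measure (Eucl n) :=
  ((Measure.hausdorffMeasure ((n : ℝ) - 1) (uSphere n))⁻¹ : ℝ≥0∞) •
    (Measure.hausdorffMeasure ((n : ℝ) - 1) : Measure (Eucl n)).restrict (uSphere n)

/-- `i`-th standard basis vector of `ℝⁿ`. -/
def basisV (n : ℕ) (i : Fin n) : Eucl n := EuclideanSpace.single i 1

/-- The Laplacian `Δf(x) = ∑ᵢ ∂²f/∂xᵢ²(x)`. -/
def lap {n : ℕ} {F : Type*} [NormedAddCommGroup F] [NormedSpace ℝ F]
    (f : Eucl n → F) (x : Eucl n) : F :=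
  ∑ i : Fin n, iteratedFDeriv ℝ 2 f x ![basisV n i, basisV n i]

/-- `f` is harmonic on `s`: twice continuously differentiable with vanishing Laplacian. -/
def HarmOn {n : ℕ} {F : Type*} [NormedAddCommGroup F] [NormedSpace ℝ F]
    (f : Eucl n → F) (s : Set (Eucl n)) : Prop :=
  ContDiffOn ℝ 2 f s ∧ ∀ x ∈ s, lap f x = 0

/-- The Jacobian matrix `Dφ(x) = (∂φ⁽ⁱ⁾/∂xⱼ)` of a map `φ : ℝⁿ → ℝⁿ`. -/
def jacMatrix {n : ℕ} (φ : Eucl n → Eucl n) (x : Eucl n) : Matrix (Fin n) (Fin n) ℝ :=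
  Matrix.of fun i j => fderiv ℝ φ x (basisV n j) i

/-- `|Dφ(x)| := |J_φ(x)|^{1/n}`, where `J_φ` is the Jacobian determinant. -/
def normDeriv {n : ℕ} (φ : Eucl n → Eucl n) (x : Eucl n) : ℝ :=
  |(jacMatrix φ x).det| ^ ((n : ℝ)⁻¹)

/-- The weighted composition operator `W_{φ,ψ} f = ψ · (f ∘ φ)`. -/
def wco {n : ℕ} (φ : Eucl n → Eucl n) (ψ : Eucl n → ℂ) (f : Eucl n → ℂ) : Eucl n → ℂ :=
  fun x => ψ x * f (φ x)

/-- The set of values `(∫_S |f(rζ)|^p dσ(ζ))^{1/p}`, `0 ≤ r < 1`. -/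
def hpNormSet (n : ℕ) (p : ℝ) (f : Eucl n → ℂ) : Set ℝ :=
  (fun r : ℝ => (∫ ζ, ‖f (r • ζ)‖ ^ p ∂(sphMeasure n)) ^ (1 / p)) '' Set.Ico (0 : ℝ) 1

/-- The set of values `|f(x)|`, `x ∈ B`. -/
def hInfSet (n : ℕ) (f : Eucl n → ℂ) : Set ℝ := (fun x => ‖f x‖) '' uBall n

/-- Membership in the harmonic Hardy space `h^p(B)`, `1 ≤ p ≤ ∞`. -/
def MemHp (n : ℕ) (p : ℝ≥0∞) (f : Eucl n → ℂ) : Prop :=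
  HarmOn f (uBall n) ∧
    if p = ⊤ then BddAbove (hInfSet n f) else BddAbove (hpNormSet n p.toReal f)

/-- The `h^p(B)` norm, `1 ≤ p ≤ ∞`. -/
def hpNorm (n : ℕ) (p : ℝ≥0∞) (f : Eucl n → ℂ) : ℝ :=
  if p = ⊤ then sSup (hInfSet n f) else sSup (hpNormSet n p.toReal f)

/-- The operator norm of a map `T` on `h^p(B)`. -/
def opNormHp (n : ℕ) (p : ℝ≥0∞) (T : (Eucl n → ℂ) → (Eucl n → ℂ)) : ℝ :=
  sInf {C : ℝ | 0 ≤ C ∧ ∀ f, MemHp n p f → hpNorm n p (T f) ≤ C * hpNorm n p f}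

/-- The one-point compactification `ℝ̂ⁿ = ℝⁿ ∪ {∞}`. -/
abbrev EuclHat (n : ℕ) := OnePoint (Eucl n)

/-- Reflection in the sphere `S(a, r)`, as a self-map of `ℝ̂ⁿ`:
`x ↦ a + r²(x−a)/|x−a|²`, with `a ↦ ∞` and `∞ ↦ a`. -/
def sphereRefl (n : ℕ) (a : Eucl n) (r : ℝ) : EuclHat n → EuclHat n :=
  OnePoint.rec (↑a)
    (fun x => if x = a then OnePoint.infty
      else ↑(a + (r ^ 2 / ‖x - a‖ ^ 2) • (x - a)))

/-- Reflection in the hyperplane `{x : x·a = t}` (`a` a unit vector), as a self-map of `ℝ̂ⁿ`: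
`x ↦ x − 2(x·a − t)a`, with `∞ ↦ ∞`. -/
def hyperRefl (n : ℕ) (a : Eucl n) (t : ℝ) : EuclHat n → EuclHat n :=
  OnePoint.rec OnePoint.infty
    (fun x => ↑(x - (2 * (⟪x, a⟫_ℝ - t)) • a))

/-- A reflection of `ℝ̂ⁿ` in a sphere or a hyperplane. -/
def IsReflection (n : ℕ) (f : EuclHat n → EuclHat n) : Prop :=
  (∃ a r, 0 < r ∧ f = sphereRefl n a r) ∨
    (∃ a t, ‖a‖ = 1 ∧ f = hyperRefl n a t)

/-- A Möbius transformation of `ℝ̂ⁿ`: a finite composition of reflections in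
spheres or hyperplanes. -/
def IsMobiusHat (n : ℕ) (g : EuclHat n → EuclHat n) : Prop :=
  ∃ L : List (EuclHat n → EuclHat n), L ≠ [] ∧ (∀ f ∈ L, IsReflection n f) ∧
    g = L.foldr (· ∘ ·) id

/-- `φ : ℝⁿ → ℝⁿ` is, on `Ω`, the restriction of a Möbius transformation of `ℝ̂ⁿ`. -/
def IsMobiusRestr (n : ℕ) (φ : Eucl n → Eucl n) (Ω : Set (Eucl n)) : Prop :=
  ∃ g : EuclHat n → EuclHat n, IsMobiusHat n g ∧ ∀ x ∈ Ω, g ↑x = ↑(φ x)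

/-- `φ ∈ Möb(B)`: `φ` agrees, on an open neighborhood of the closed unit ball, with a
Möbius transformation of `ℝ̂ⁿ`, and `φ` maps `B` bijectively onto `B`.  (Such a `φ` is
the canonical extension of the Möbius transformation to the closed unit ball.) -/
def IsMobiusBall (n : ℕ) (φ : Eucl n → Eucl n) : Prop :=
  (∃ U : Set (Eucl n), IsOpen U ∧ Metric.closedBall 0 1 ⊆ U ∧ IsMobiusRestr n φ U) ∧
    Set.BijOn φ (uBall n) (uBall n)

/-- The nontangential approach region `Γ_δ(ζ) = {x ∈ B : |x − ζ| < (δ/2)(1 − |x|²)}`. -/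
def ntRegion (n : ℕ) (δ : ℝ) (ζ : Eucl n) : Set (Eucl n) :=
  {x | x ∈ uBall n ∧ ‖x - ζ‖ < δ / 2 * (1 - ‖x‖ ^ 2)}

/-- `g` has nontangential limit `L` at `ζ ∈ S`. -/
def HasNTLimit (n : ℕ) (g : Eucl n → ℂ) (ζ : Eucl n) (L : ℂ) : Prop :=
  ∀ δ : ℝ, 1 < δ → Filter.Tendsto g (nhdsWithin ζ (ntRegion n δ ζ)) (nhds L)

/-- The Poisson kernel `P(x, ζ) = (1 − |x|²)/|x − ζ|ⁿ` for the unit ball. -/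
def poissonK (n : ℕ) (x ζ : Eucl n) : ℝ := (1 - ‖x‖ ^ 2) / ‖x - ζ‖ ^ n

/-- The extended Poisson kernel `P_y(x) = (1 − |x|²|y|²)/(1 − 2x·y + |x|²|y|²)^{n/2}`. -/
def extPoisson (n : ℕ) (y x : Eucl n) : ℝ :=
  (1 - ‖x‖ ^ 2 * ‖y‖ ^ 2) / (1 - 2 * ⟪x, y⟫_ℝ + ‖x‖ ^ 2 * ‖y‖ ^ 2) ^ ((n : ℝ) / 2)

/-- The Gauss hypergeometric function `₂F₁(a, b; c; r) = ∑ₖ (a)ₖ(b)ₖ/((c)ₖ k!) rᵏ`. -/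
def gaussHyper (a b c r : ℝ) : ℝ :=
  ∑' k : ℕ, ((ascPochhammer ℝ k).eval a * (ascPochhammer ℝ k).eval b) /
    ((ascPochhammer ℝ k).eval c * (Nat.factorial k)) * r ^ k

/-- A linear operator on (the function class) `h^p(B)`. -/
def IsLinOnHp (n : ℕ) (p : ℝ≥0∞) (T : (Eucl n → ℂ) → (Eucl n → ℂ)) : Prop :=
  (∀ f, MemHp n p f → MemHp n p (T f)) ∧
    (∀ f g, MemHp n p f → MemHp n p g → T (f + g) = T f + T g) ∧
    (∀ (c : ℂ) (f), MemHp n p f → T (c • f) = c • T f)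

/-- A compact operator on `h^p(B)`: a linear operator mapping the unit ball of `h^p(B)`
to a totally bounded set. -/
def IsCompactOnHp (n : ℕ) (p : ℝ≥0∞) (K : (Eucl n → ℂ) → (Eucl n → ℂ)) : Prop :=
  IsLinOnHp n p K ∧
    ∀ ε : ℝ, 0 < ε → ∃ G : Finset (Eucl n → ℂ),
      ∀ f, MemHp n p f → hpNorm n p f ≤ 1 → ∃ g ∈ G, hpNorm n p (K f - g) ≤ ε

/-- The essential norm of an operator `T` on `h^p(B)`: the distance, in operator norm,
from `T` to the compact operators on `h^p(B)`. -/
def essNormHp (n : ℕ) (p : ℝ≥0∞) (T : (Eucl n → ℂ) → (Eucl n → ℂ)) : ℝ :=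
  sInf {c : ℝ | ∃ K, IsCompactOnHp n p K ∧ opNormHp n p (fun f => T f - K f) = c}

/-- The duality pairing `⟨f, g⟩ = ∫_S f* g* dσ`, relative to a boundary-function
assignment `bd`. -/
def hpPairing (n : ℕ) (bd : (Eucl n → ℂ) → (Eucl n → ℂ)) (f g : Eucl n → ℂ) : ℂ :=
  ∫ ζ, bd f ζ * bd g ζ ∂(sphMeasure n)

end

/-! ### The chordal distance -/

/-- The factor `1 + |x|²` of the chordal distance, with value `1` at `∞`. -/
noncomputable def chordWt (n : ℕ) : EuclHat n → ℝ :=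
  OnePoint.rec 1 (fun x => 1 + ‖x‖ ^ 2)

/-- The squared Euclidean distance, with value `1` between a finite point and `∞`. -/
noncomputable def chordNum (n : ℕ) : EuclHat n → EuclHat n → ℝ :=
  OnePoint.rec (OnePoint.rec 0 (fun _ => 1)) (fun x => OnePoint.rec 1 (fun y => ‖x - y‖ ^ 2))

/-- The square of the chordal distance on `ℝ̂ⁿ` (up to a constant factor). -/
noncomputable def chordSq (n : ℕ) (x y : EuclHat n) : ℝ :=
  chordNum n x y / (chordWt n x * chordWt n y)

section
variable {n : ℕ}

@[simp] lemma chordWt_infty : chordWt n OnePoint.infty = 1 := rfl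
@[simp] lemma chordWt_coe (x : Eucl n) : chordWt n ↑x = 1 + ‖x‖ ^ 2 := rfl
@[simp] lemma chordNum_infty_infty : chordNum n OnePoint.infty OnePoint.infty = 0 := rfl
@[simp] lemma chordNum_infty_coe (x : Eucl n) : chordNum n OnePoint.infty ↑x = 1 := rfl
@[simp] lemma chordNum_coe_infty (x : Eucl n) : chordNum n ↑x OnePoint.infty = 1 := rfl
@[simp] lemma chordNum_coe_coe (x y : Eucl n) : chordNum n ↑x ↑y = ‖x - y‖ ^ 2 := rfl

lemma sphereRefl_infty (a : Eucl n) (r : ℝ) : sphereRefl n a r OnePoint.infty = ↑a := rfl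
lemma sphereRefl_coe (a : Eucl n) (r : ℝ) (x : Eucl n) : sphereRefl n a r ↑x =
    if x = a then OnePoint.infty else ↑(a + (r ^ 2 / ‖x - a‖ ^ 2) • (x - a)) := rfl
lemma hyperRefl_infty (a : Eucl n) (t : ℝ) :
    hyperRefl n a t OnePoint.infty = OnePoint.infty := rfl
lemma hyperRefl_coe (a : Eucl n) (t : ℝ) (x : Eucl n) :
    hyperRefl n a t ↑x = ↑(x - (2 * (⟪x, a⟫_ℝ - t)) • a) := rfl

lemma chordWt_pos (x : EuclHat n) : 0 < chordWt n x := by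
  induction x using OnePoint.rec with
  | infty => simp
  | coe x => rw [chordWt_coe]; positivity

lemma chordNum_nonneg (x y : EuclHat n) : 0 ≤ chordNum n x y := by
  induction x using OnePoint.rec <;> induction y using OnePoint.rec <;> simp

/-- A map that multiplies `chordNum` by a conformal factor `w x * w y` distorts the chordal distance
boundedly as soon as `w` is controlled by the ratio of the chordal weights. -/
lemma chordSq_le_of_factor {g : EuclHat n → EuclHat n} (w : EuclHat n → ℝ) {C : ℝ}
    (hw : ∀ x, 0 ≤ w x) (hg : ∀ x y, chordNum n (g x) (g y) = w x * w y * chordNum n x y)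
    (hC : ∀ x, w x * chordWt n x ≤ C * chordWt n (g x)) (x y : EuclHat n) :
    chordSq n (g x) (g y) ≤ C ^ 2 * chordSq n x y := by
  have h1 := chordWt_pos x
  have h2 := chordWt_pos y
  have h3 := chordWt_pos (g x)
  have h4 := chordWt_pos (g y)
  have hmul := mul_le_mul (hC x) (hC y) (mul_nonneg (hw y) h2.le)
    ((mul_nonneg (hw x) h1.le).trans (hC x))
  have h5 := mul_le_mul_of_nonneg_left hmul (chordNum_nonneg x y)
  unfold chordSq
  rw [hg, ← mul_div_assoc, div_le_div_iff₀ (by positivity) (by positivity)]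
  linarith

/-! ### Distortion of the chordal distance by a sphere reflection -/

lemma norm_add_sq_le_two (u v : Eucl n) : ‖u + v‖ ^ 2 ≤ 2 * ‖u‖ ^ 2 + 2 * ‖v‖ ^ 2 := by
  have h := norm_add_le u v
  nlinarith [norm_nonneg (u + v), sq_nonneg (‖u‖ - ‖v‖), norm_nonneg u, norm_nonneg v]

lemma norm_right_sq_le_two (u v : Eucl n) : ‖v‖ ^ 2 ≤ 2 * ‖u + v‖ ^ 2 + 2 * ‖u‖ ^ 2 := by
  have h := norm_add_sq_le_two (u + v) (-u)
  simpa using h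

/-- The inversion identity `|u/|u|² - v/|v|²|² = |u - v|² / (|u|² |v|²)`, for inversion in a
sphere of radius `r`. -/
lemma norm_inversion_sub_sq (r : ℝ) {u v : Eucl n} (hu : u ≠ 0) (hv : v ≠ 0) :
    ‖(r ^ 2 / ‖u‖ ^ 2) • u - (r ^ 2 / ‖v‖ ^ 2) • v‖ ^ 2 =
      r ^ 2 / ‖u‖ ^ 2 * (r ^ 2 / ‖v‖ ^ 2) * ‖u - v‖ ^ 2 := by
  have hu' : ‖u‖ ≠ 0 := norm_ne_zero_iff.2 hu
  have hv' : ‖v‖ ≠ 0 := norm_ne_zero_iff.2 hv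
  rw [norm_sub_sq_real, norm_sub_sq_real, norm_smul, norm_smul, real_inner_smul_left,
    real_inner_smul_right, mul_pow, mul_pow, Real.norm_eq_abs, Real.norm_eq_abs, sq_abs, sq_abs]
  field_simp
  ring

/-- The conformal factor of the reflection in `S(a, r)`. The values at `a` and `∞` are the ones for
which the distance formula extends to all of `ℝ̂ⁿ`. -/
noncomputable def sphereFactor (n : ℕ) (a : Eucl n) (r : ℝ) : EuclHat n → ℝ :=
  OnePoint.rec (r ^ 2) (fun x => if x = a then (r ^ 2)⁻¹ else r ^ 2 / ‖x - a‖ ^ 2)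

lemma sphereFactor_infty (a : Eucl n) (r : ℝ) :
    sphereFactor n a r OnePoint.infty = r ^ 2 := rfl
lemma sphereFactor_coe (a : Eucl n) (r : ℝ) (x : Eucl n) : sphereFactor n a r ↑x =
    if x = a then (r ^ 2)⁻¹ else r ^ 2 / ‖x - a‖ ^ 2 := rfl

lemma sphereRefl_chordNum (a : Eucl n) {r : ℝ} (hr : 0 < r) (x y : EuclHat n) :
    chordNum n (sphereRefl n a r x) (sphereRefl n a r y) =
      sphereFactor n a r x * sphereFactor n a r y * chordNum n x y := by
  have key : ∀ z : Eucl n, z ≠ a →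
      ‖(r ^ 2 / ‖z - a‖ ^ 2) • (z - a)‖ ^ 2 = r ^ 2 * (r ^ 2 / ‖z - a‖ ^ 2) := by
    intro z hz
    have hz' : ‖z - a‖ ≠ 0 := norm_ne_zero_iff.2 (sub_ne_zero.2 hz)
    rw [norm_smul, mul_pow, Real.norm_eq_abs, sq_abs]
    field_simp
  induction x using OnePoint.rec with
  | infty =>
    induction y using OnePoint.rec with
    | infty => simp [sphereRefl_infty]
    | coe y =>
      rw [sphereRefl_infty, sphereRefl_coe, sphereFactor_infty, sphereFactor_coe]
      by_cases hy : y = a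
      · simp [hy, hr.ne']
      · simp only [hy, if_false, chordNum_coe_coe, chordNum_infty_coe, mul_one]
        rw [← key y hy, ← norm_neg]; congr 2; abel
  | coe x =>
    induction y using OnePoint.rec with
    | infty =>
      rw [sphereRefl_infty, sphereRefl_coe, sphereFactor_infty, sphereFactor_coe]
      by_cases hx : x = a
      · simp [hx, hr.ne']
      · simp only [hx, if_false, chordNum_coe_coe, chordNum_coe_infty, mul_one]
        rw [mul_comm, ← key x hx]; congr 2; abel
    | coe y =>
      rw [sphereRefl_coe, sphereRefl_coe, sphereFactor_coe, sphereFactor_coe]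
      by_cases hx : x = a
      · by_cases hy : y = a
        · simp [hx, hy]
        · have hy' : ‖y - a‖ ≠ 0 := norm_ne_zero_iff.2 (sub_ne_zero.2 hy)
          simp only [hx, hy, if_true, if_false, chordNum_infty_coe, chordNum_coe_coe]
          rw [norm_sub_rev a y]; field_simp
      · have hx' : ‖x - a‖ ≠ 0 := norm_ne_zero_iff.2 (sub_ne_zero.2 hx)
        by_cases hy : y = a
        · simp only [hx, hy, if_true, if_false, chordNum_coe_infty, chordNum_coe_coe]
          field_simp
        · simp only [hx, hy, if_false, chordNum_coe_coe]
          rw [add_sub_add_left_eq_sub,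
            norm_inversion_sub_sq r (sub_ne_zero.2 hx) (sub_ne_zero.2 hy), sub_sub_sub_cancel_right]

lemma sphereRefl_chordWt (a : Eucl n) {r : ℝ} (hr : 0 < r) : ∃ C : ℝ, ∀ x : EuclHat n,
    sphereFactor n a r x * chordWt n x ≤ C * chordWt n (sphereRefl n a r x) := by
  set A := ‖a‖ ^ 2 with hA
  have hA0 : 0 ≤ A := by positivity
  have hr2 : 0 < r ^ 2 := by positivity
  refine ⟨2 * (1 + A) * (1 + 2 * A) / r ^ 2 + 2 * r ^ 2, fun x => ?_⟩
  induction x using OnePoint.rec with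
  | infty =>
    rw [sphereRefl_infty, sphereFactor_infty, chordWt_infty, chordWt_coe, ← hA]
    have : 0 ≤ 2 * (1 + A) * (1 + 2 * A) / r ^ 2 := by positivity
    nlinarith [mul_nonneg this hA0, mul_nonneg hr2.le hA0]
  | coe x =>
    rw [sphereRefl_coe, sphereFactor_coe]
    by_cases hx : x = a
    · subst hx
      simp only [if_true, chordWt_infty, chordWt_coe, mul_one, ← hA]
      have : (r ^ 2)⁻¹ * (1 + A) ≤ 2 * (1 + A) * (1 + 2 * A) / r ^ 2 := by
        rw [inv_mul_eq_div]; gcongr; nlinarith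
      linarith
    · simp only [hx, if_false, chordWt_coe]
      have hs' : ‖x - a‖ ≠ 0 := norm_ne_zero_iff.2 (sub_ne_zero.2 hx)
      set v := (r ^ 2 / ‖x - a‖ ^ 2) • (x - a) with hv
      have hv2 : ‖v‖ ^ 2 = r ^ 2 * (r ^ 2 / ‖x - a‖ ^ 2) := by
        rw [hv, norm_smul, mul_pow, Real.norm_eq_abs, sq_abs]; field_simp
      have h1 : ‖x‖ ^ 2 ≤ 2 * A + 2 * ‖x - a‖ ^ 2 := by
        simpa using norm_add_sq_le_two a (x - a)
      have h2 := norm_right_sq_le_two a v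
      rw [← hA] at h2
      set V := ‖a + v‖ ^ 2
      have hV0 : 0 ≤ V := by positivity
      calc r ^ 2 / ‖x - a‖ ^ 2 * (1 + ‖x‖ ^ 2)
          ≤ r ^ 2 / ‖x - a‖ ^ 2 * (1 + (2 * A + 2 * ‖x - a‖ ^ 2)) := by gcongr
        _ = ‖v‖ ^ 2 / r ^ 2 * (1 + 2 * A) + 2 * r ^ 2 := by rw [hv2]; field_simp; ring
        _ ≤ (2 * V + 2 * A) / r ^ 2 * (1 + 2 * A) + 2 * r ^ 2 := by gcongr
        _ ≤ (2 * (1 + A) * (1 + V)) / r ^ 2 * (1 + 2 * A) + 2 * r ^ 2 * (1 + V) := by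
          refine add_le_add ?_ (le_mul_of_one_le_right (by positivity) (by linarith))
          gcongr
          nlinarith [mul_nonneg hA0 hV0]
        _ = _ := by ring

lemma sphereRefl_involutive (a : Eucl n) {r : ℝ} (hr : 0 < r) :
    Function.Involutive (sphereRefl n a r) := by
  intro x
  induction x using OnePoint.rec with
  | infty => simp [sphereRefl_infty, sphereRefl_coe]
  | coe x =>
    rw [sphereRefl_coe]
    by_cases hx : x = a
    · simp [hx, sphereRefl_infty]
    · have hs : x - a ≠ 0 := sub_ne_zero.2 hx
      have hs' : ‖x - a‖ ≠ 0 := norm_ne_zero_iff.2 hs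
      have hc : r ^ 2 / ‖x - a‖ ^ 2 ≠ 0 := by positivity
      rw [if_neg hx, sphereRefl_coe, if_neg (by simpa [hr.ne'] using hs), add_sub_cancel_left,
        smul_smul, norm_smul, mul_pow, Real.norm_eq_abs, sq_abs]
      have : r ^ 2 / ((r ^ 2 / ‖x - a‖ ^ 2) ^ 2 * ‖x - a‖ ^ 2) * (r ^ 2 / ‖x - a‖ ^ 2) = 1 := by
        field_simp
      rw [this, one_smul, add_sub_cancel]

/-! ### Distortion of the chordal distance by a hyperplane reflection -/

lemma hyperRefl_chordNum {a : Eucl n} (ha : ‖a‖ = 1) (t : ℝ) (x y : EuclHat n) :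
    chordNum n (hyperRefl n a t x) (hyperRefl n a t y) = chordNum n x y := by
  induction x using OnePoint.rec with
  | infty => induction y using OnePoint.rec <;> rfl
  | coe x =>
    induction y using OnePoint.rec with
    | infty => rfl
    | coe y =>
      rw [hyperRefl_coe, hyperRefl_coe, chordNum_coe_coe, chordNum_coe_coe]
      have : x - (2 * (⟪x, a⟫_ℝ - t)) • a - (y - (2 * (⟪y, a⟫_ℝ - t)) • a) =
          (x - y) - (2 * ⟪x - y, a⟫_ℝ) • a := by
        rw [inner_sub_left]; module
      rw [this, norm_sub_sq_real, norm_smul, real_inner_smul_right, mul_pow, Real.norm_eq_abs,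
        sq_abs, ha]
      ring

lemma hyperRefl_chordWt {a : Eucl n} (ha : ‖a‖ = 1) (t : ℝ) (x : EuclHat n) :
    chordWt n x ≤ (2 + 8 * t ^ 2) * chordWt n (hyperRefl n a t x) := by
  induction x using OnePoint.rec with
  | infty => rw [hyperRefl_infty, chordWt_infty]; nlinarith [sq_nonneg t]
  | coe x =>
    rw [hyperRefl_coe, chordWt_coe, chordWt_coe]
    set z := x - (2 * (⟪x, a⟫_ℝ - t)) • a with hz
    have h : ‖z - (2 * t) • a‖ ^ 2 = ‖x‖ ^ 2 := by
      have : z - (2 * t) • a = x - (2 * ⟪x, a⟫_ℝ) • a := by rw [hz]; module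
      rw [this, norm_sub_sq_real, norm_smul, real_inner_smul_right, mul_pow, Real.norm_eq_abs,
        sq_abs, ha]
      ring
    have h2 := norm_add_sq_le_two z (-((2 * t) • a))
    rw [← sub_eq_add_neg, h, norm_neg, norm_smul, mul_pow, Real.norm_eq_abs, sq_abs, ha] at h2
    nlinarith [mul_nonneg (sq_nonneg t) (sq_nonneg ‖z‖), sq_nonneg t]

lemma hyperRefl_involutive {a : Eucl n} (ha : ‖a‖ = 1) (t : ℝ) :
    Function.Involutive (hyperRefl n a t) := by
  intro x
  induction x using OnePoint.rec with
  | infty => rfl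
  | coe x =>
    rw [hyperRefl_coe, hyperRefl_coe, inner_sub_left, real_inner_smul_left,
      real_inner_self_eq_norm_sq, ha]
    congr 1
    module

/-! ### Möbius transformations of the compactified space -/

lemma IsReflection.chord_le {g : EuclHat n → EuclHat n} (hg : IsReflection n g) :
    ∃ C : ℝ, 0 ≤ C ∧ ∀ x y, chordSq n (g x) (g y) ≤ C * chordSq n x y := by
  rcases hg with ⟨a, r, hr, rfl⟩ | ⟨a, t, ha, rfl⟩
  · obtain ⟨C, hC⟩ := sphereRefl_chordWt a hr
    refine ⟨C ^ 2, sq_nonneg C, chordSq_le_of_factor _ (fun x => ?_)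
      (sphereRefl_chordNum a hr) hC⟩
    induction x using OnePoint.rec with
    | infty => rw [sphereFactor_infty]; positivity
    | coe x => rw [sphereFactor_coe]; split_ifs <;> positivity
  · exact ⟨(2 + 8 * t ^ 2) ^ 2, by positivity, chordSq_le_of_factor (fun _ => 1)
      (fun _ => zero_le_one) (fun x y => by rw [hyperRefl_chordNum ha]; ring)
      (fun x => by simpa using hyperRefl_chordWt ha t x)⟩

lemma IsReflection.involutive {g : EuclHat n → EuclHat n} (hg : IsReflection n g) :
    Function.Involutive g := by
  rcases hg with ⟨a, r, hr, rfl⟩ | ⟨a, t, ha, rfl⟩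
  exacts [sphereRefl_involutive a hr, hyperRefl_involutive ha t]

lemma IsMobiusHat.chord_equiv {g : EuclHat n → EuclHat n} (hg : IsMobiusHat n g) :
    ∃ C : ℝ, 0 ≤ C ∧ ∀ x y, chordSq n (g x) (g y) ≤ C * chordSq n x y ∧
      chordSq n x y ≤ C * chordSq n (g x) (g y) := by
  obtain ⟨L, -, hL, rfl⟩ := hg
  induction L with
  | nil => exact ⟨1, zero_le_one, fun x y => by simp⟩
  | cons h L ih =>
    obtain ⟨C, hC0, hC⟩ := ih fun f hf => hL f (List.mem_cons_of_mem _ hf)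
    have hh := hL h List.mem_cons_self
    obtain ⟨D, hD0, hD⟩ := hh.chord_le
    refine ⟨C * D, mul_nonneg hC0 hD0, fun x y => ?_⟩
    simp only [List.foldr_cons, Function.comp_apply]
    set X := L.foldr (· ∘ ·) id x
    set Y := L.foldr (· ∘ ·) id y
    -- a reflection is its own inverse, so the upper bound applied to `h X`, `h Y` is a lower bound
    have hrev := hD (h X) (h Y)
    rw [hh.involutive, hh.involutive] at hrev
    constructor
    · calc _ ≤ D * chordSq n X Y := hD _ _
        _ ≤ D * (C * chordSq n x y) := by gcongr; exact (hC x y).1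
        _ = _ := by ring
    · calc _ ≤ C * chordSq n X Y := (hC x y).2
        _ ≤ C * (D * chordSq n (h X) (h Y)) := by gcongr
        _ = _ := by ring

/-! ### Möbius transformations of the ball are bi-Lipschitz -/

lemma chordSq_coe_le (x y : Eucl n) : chordSq n ↑x ↑y ≤ ‖x - y‖ ^ 2 := by
  simp only [chordSq, chordNum_coe_coe, chordWt_coe]
  apply div_le_self (by positivity)
  nlinarith [mul_nonneg (sq_nonneg ‖x‖) (sq_nonneg ‖y‖), sq_nonneg ‖x‖, sq_nonneg ‖y‖]

lemma norm_sub_sq_eq_chordSq (x y : Eucl n) :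
    ‖x - y‖ ^ 2 = (1 + ‖x‖ ^ 2) * (1 + ‖y‖ ^ 2) * chordSq n ↑x ↑y := by
  simp only [chordSq, chordNum_coe_coe, chordWt_coe]
  field_simp

lemma norm_sub_sq_le_chordSq {x y : Eucl n} (hx : ‖x‖ ≤ 1) (hy : ‖y‖ ≤ 1) :
    ‖x - y‖ ^ 2 ≤ 4 * chordSq n ↑x ↑y := by
  rw [norm_sub_sq_eq_chordSq]
  have : 0 ≤ chordSq n ↑x ↑y := div_nonneg (chordNum_nonneg _ _)
    (mul_pos (chordWt_pos _) (chordWt_pos _)).le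
  gcongr
  nlinarith [norm_nonneg x, norm_nonneg y, sq_nonneg ‖x‖, sq_nonneg ‖y‖,
    mul_le_mul (show 1 + ‖x‖ ^ 2 ≤ 2 by nlinarith [norm_nonneg x])
      (show 1 + ‖y‖ ^ 2 ≤ 2 by nlinarith [norm_nonneg y]) (by positivity) (by norm_num)]

lemma IsMobiusBall.exists_bilipschitz {φ : Eucl n → Eucl n} (hφ : IsMobiusBall n φ) :
    MapsTo φ (closedBall 0 1) (closedBall 0 1) ∧
    ∃ K : ℝ, 0 < K ∧ ∀ x ∈ closedBall (0 : Eucl n) 1, ∀ y ∈ closedBall (0 : Eucl n) 1,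
      ‖φ x - φ y‖ ≤ K * ‖x - y‖ ∧ ‖x - y‖ ≤ K * ‖φ x - φ y‖ := by
  obtain ⟨⟨U, -, hU, g, hg, hgφ⟩, hbij⟩ := hφ
  obtain ⟨C, hC0, hC⟩ := hg.chord_equiv
  replace hC : ∀ x ∈ closedBall (0 : Eucl n) 1, ∀ y ∈ closedBall (0 : Eucl n) 1,
      chordSq n ↑(φ x) ↑(φ y) ≤ C * chordSq n ↑x ↑y ∧
        chordSq n ↑x ↑y ≤ C * chordSq n ↑(φ x) ↑(φ y) := by
    intro x hx y hy
    rw [← hgφ x (hU hx), ← hgφ y (hU hy)]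
    exact hC _ _
  have hmaps : MapsTo φ (closedBall 0 1) (closedBall 0 1) := by
    intro z hz
    -- the chordal bound with `z` fixed makes `φ` continuous at `z` along `B`
    have hcl : z ∈ closure (uBall n) := by
      rw [uBall, closure_ball _ one_ne_zero]; exact hz
    have : (nhdsWithin z (uBall n)).NeBot := mem_closure_iff_nhdsWithin_neBot.1 hcl
    have hbound : ∀ᶠ x in nhdsWithin z (uBall n),
        ‖φ x - φ z‖ ^ 2 ≤ 2 * (1 + ‖φ z‖ ^ 2) * (C * ‖x - z‖ ^ 2) := by
      filter_upwards [self_mem_nhdsWithin] with x hx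
      have hx1 : ‖φ x‖ < 1 := by simpa [uBall] using hbij.mapsTo hx
      rw [norm_sub_sq_eq_chordSq]
      have h1 := (hC x (ball_subset_closedBall hx) z hz).1
      have h2 := mul_le_mul_of_nonneg_left (chordSq_coe_le x z) hC0
      have h3 : 1 + ‖φ x‖ ^ 2 ≤ 2 := by nlinarith [norm_nonneg (φ x)]
      gcongr
      · exact div_nonneg (chordNum_nonneg _ _) (mul_pos (chordWt_pos _) (chordWt_pos _)).le
      · exact h1.trans h2
    have hlim : Tendsto (fun x => ‖φ x - φ z‖ ^ 2) (nhdsWithin z (uBall n)) (nhds 0) := by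
      refine squeeze_zero' (Eventually.of_forall fun x => by positivity) hbound ?_
      have : Continuous fun x : Eucl n => 2 * (1 + ‖φ z‖ ^ 2) * (C * ‖x - z‖ ^ 2) := by fun_prop
      simpa using (this.tendsto z).mono_left nhdsWithin_le_nhds
    have hlim' : Tendsto φ (nhdsWithin z (uBall n)) (nhds (φ z)) := by
      rw [tendsto_iff_norm_sub_tendsto_zero]
      simpa using hlim.sqrt
    exact isClosed_closedBall.mem_of_tendsto hlim' (by
      filter_upwards [self_mem_nhdsWithin] with x hx
      exact ball_subset_closedBall (hbij.mapsTo hx))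
  refine ⟨hmaps, 2 * √C + 1, by positivity, fun x hx y hy => ?_⟩
  -- passing from squared distances to distances
  have root : ∀ s t : ℝ, 0 ≤ t → s ^ 2 ≤ 4 * (C * t ^ 2) → s ≤ (2 * √C + 1) * t := by
    intro s t ht hst
    have h : s ≤ 2 * √C * t := by
      apply le_of_sq_le_sq _ (by positivity)
      rw [mul_pow, mul_pow, Real.sq_sqrt hC0]; linarith
    linarith
  have nx := mem_closedBall_zero_iff.1 hx
  have ny := mem_closedBall_zero_iff.1 hy
  have nx' := mem_closedBall_zero_iff.1 (hmaps hx)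
  have ny' := mem_closedBall_zero_iff.1 (hmaps hy)
  constructor
  · refine root _ _ (norm_nonneg _) ((norm_sub_sq_le_chordSq nx' ny').trans ?_)
    gcongr
    exact (hC x hx y hy).1.trans (mul_le_mul_of_nonneg_left (chordSq_coe_le x y) hC0)
  · refine root _ _ (norm_nonneg _) ((norm_sub_sq_le_chordSq nx ny).trans ?_)
    gcongr
    exact (hC x hx y hy).2.trans (mul_le_mul_of_nonneg_left (chordSq_coe_le _ _) hC0)

/-- A bi-Lipschitz map of the closed ball that maps `B` onto `B` maps `S` onto `S`. -/
lemma image_sphere {φ : Eucl n → Eucl n} {K : ℝ} (hbij : BijOn φ (uBall n) (uBall n))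
    (hmaps : MapsTo φ (closedBall 0 1) (closedBall 0 1))
    (hK : ∀ x ∈ closedBall (0 : Eucl n) 1, ∀ y ∈ closedBall (0 : Eucl n) 1,
      ‖φ x - φ y‖ ≤ K * ‖x - y‖ ∧ ‖x - y‖ ≤ K * ‖φ x - φ y‖) :
    φ '' uSphere n = uSphere n := by
  have hinj : InjOn φ (closedBall 0 1) := by
    intro x hx y hy hxy
    have := (hK x hx y hy).2
    rw [hxy, sub_self, norm_zero, mul_zero] at this
    exact sub_eq_zero.1 (norm_le_zero_iff.1 this)
  have hcont : ContinuousOn φ (closedBall 0 1) :=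
    (LipschitzOnWith.of_dist_le' (K := K) fun x hx y hy => by
      rw [dist_eq_norm, dist_eq_norm]; exact (hK x hx y hy).1).continuousOn
  have hsurj : closedBall (0 : Eucl n) 1 ⊆ φ '' closedBall 0 1 := by
    rw [← closure_ball (0 : Eucl n) one_ne_zero]
    refine closure_minimal ?_ ?_
    · exact hbij.image_eq.symm.subset.trans (image_mono subset_closure)
    · rw [closure_ball (0 : Eucl n) one_ne_zero]
      exact ((isCompact_closedBall _ _).image_of_continuousOn hcont).isClosed
  apply Subset.antisymm
  · rintro _ ⟨x, hx, rfl⟩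
    have hxc : x ∈ closedBall (0 : Eucl n) 1 := sphere_subset_closedBall hx
    by_contra hnot
    have hb : φ x ∈ uBall n := by
      rw [← ball_union_sphere] at hmaps
      exact ((hmaps (by rw [ball_union_sphere]; exact hxc)).resolve_right hnot)
    obtain ⟨y, hy, hyx⟩ := hbij.surjOn hb
    have := hinj (ball_subset_closedBall hy) hxc hyx
    subst this
    exact (sphere_disjoint_ball.ne_of_mem hx hy) rfl
  · intro η hη
    obtain ⟨x, hx, rfl⟩ := hsurj (sphere_subset_closedBall hη)
    refine ⟨x, ?_, rfl⟩
    rw [← ball_union_sphere] at hx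
    refine hx.resolve_left fun hb => ?_
    exact (sphere_disjoint_ball.ne_of_mem hη (hbij.mapsTo hb)) rfl

/-! ### Approach regions and null sets under bi-Lipschitz maps -/

lemma exists_mem_sphere_norm_sub_eq (hn : 2 ≤ n) {y : Eucl n} (hy : ‖y‖ < 1) :
    ∃ η ∈ uSphere n, ‖y - η‖ = 1 - ‖y‖ := by
  by_cases h0 : y = 0
  · refine ⟨basisV n ⟨0, by omega⟩, ?_, ?_⟩ <;> simp [uSphere, basisV, h0]
  · have h0' : ‖y‖ ≠ 0 := norm_ne_zero_iff.2 h0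
    refine ⟨‖y‖⁻¹ • y, by simp [uSphere, norm_smul, h0'], ?_⟩
    have h1 : y - ‖y‖⁻¹ • y = (1 - ‖y‖⁻¹) • y := by module
    have h2 : 1 ≤ ‖y‖⁻¹ := (one_le_inv₀ (by positivity)).2 hy.le
    rw [h1, norm_smul, Real.norm_eq_abs, abs_of_nonpos (by linarith)]
    field_simp
    ring

/-- The aperture grows by the factor `2K²`: one factor `K` comes from `|φ x - φ ζ| ≤ K |x - ζ|`, the
other from `1 - |x| ≤ K (1 - |φ x|)`, and `2` from comparing `1 - t²` with `1 - t`. -/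
lemma mapsTo_ntRegion (hn : 2 ≤ n) {φ : Eucl n → Eucl n} {K : ℝ} (hK0 : 0 < K)
    (hmaps : MapsTo φ (uBall n) (uBall n)) (hsph : φ '' uSphere n = uSphere n)
    (hK : ∀ x ∈ closedBall (0 : Eucl n) 1, ∀ y ∈ closedBall (0 : Eucl n) 1,
      ‖φ x - φ y‖ ≤ K * ‖x - y‖ ∧ ‖x - y‖ ≤ K * ‖φ x - φ y‖)
    {ζ : Eucl n} (hζ : ζ ∈ uSphere n) {δ δ' : ℝ} (hδ : 1 < δ) (hδ' : 2 * K ^ 2 * δ ≤ δ') :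
    MapsTo φ (ntRegion n δ ζ) (ntRegion n δ' (φ ζ)) := by
  rintro x ⟨hx, hxζ⟩
  have hxc : x ∈ closedBall (0 : Eucl n) 1 := ball_subset_closedBall hx
  have hζc : ζ ∈ closedBall (0 : Eucl n) 1 := sphere_subset_closedBall hζ
  refine ⟨hmaps hx, ?_⟩
  have nx : ‖x‖ < 1 := by simpa [uBall] using hx
  have nφ : ‖φ x‖ < 1 := by simpa [uBall] using hmaps hx
  obtain ⟨η, hη, hdist⟩ := exists_mem_sphere_norm_sub_eq hn nφ
  rw [← hsph] at hη
  obtain ⟨ξ, hξ, rfl⟩ := hη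
  have nξ : ‖ξ‖ = 1 := by simpa [uSphere] using hξ
  have h1 : 1 - ‖x‖ ≤ K * (1 - ‖φ x‖) := by
    have := (hK x hxc ξ (sphere_subset_closedBall hξ)).2
    rw [hdist] at this
    have h' := norm_sub_norm_le ξ x
    rw [nξ, norm_sub_rev] at h'
    exact h'.trans this
  have h2 : 1 - ‖x‖ ^ 2 ≤ 2 * (1 - ‖x‖) := by nlinarith [sq_nonneg (1 - ‖x‖)]
  have h3 : 1 - ‖φ x‖ ≤ 1 - ‖φ x‖ ^ 2 := by nlinarith [norm_nonneg (φ x)]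
  have hδ0 : 0 < δ := by linarith
  have h4 : 0 ≤ 1 - ‖φ x‖ ^ 2 := by linarith
  calc ‖φ x - φ ζ‖ ≤ K * ‖x - ζ‖ := (hK x hxc ζ hζc).1
    _ < K * (δ / 2 * (1 - ‖x‖ ^ 2)) := by gcongr
    _ ≤ K * (δ / 2 * (2 * (K * (1 - ‖φ x‖ ^ 2)))) := by
      gcongr
      exact h2.trans (by gcongr; exact h1.trans (by gcongr))
    _ = (2 * K ^ 2 * δ) / 2 * (1 - ‖φ x‖ ^ 2) := by ring
    _ ≤ δ' / 2 * (1 - ‖φ x‖ ^ 2) := by gcongr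

lemma hausdorff_preimage_null {φ : Eucl n → Eucl n} {K d : ℝ} (hd : 0 ≤ d) {s N : Set (Eucl n)}
    (hK : ∀ x ∈ s, ∀ y ∈ s, ‖x - y‖ ≤ K * ‖φ x - φ y‖)
    (hN : Measure.hausdorffMeasure d N = 0) :
    Measure.hausdorffMeasure d (s ∩ φ ⁻¹' N) = 0 := by
  have hinj : InjOn φ s := by
    intro x hx y hy hxy
    have := hK x hx y hy
    rw [hxy, sub_self, norm_zero, mul_zero] at this
    exact sub_eq_zero.1 (norm_le_zero_iff.1 this)
  have hlip : LipschitzOnWith K.toNNReal (Function.invFunOn φ s) (φ '' s ∩ N) := by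
    refine LipschitzOnWith.of_dist_le' ?_
    rintro _ ⟨⟨x, hx, rfl⟩, -⟩ _ ⟨⟨y, hy, rfl⟩, -⟩
    rw [hinj.leftInvOn_invFunOn hx, hinj.leftInvOn_invFunOn hy, dist_eq_norm, dist_eq_norm]
    exact hK x hx y hy
  have hsub : s ∩ φ ⁻¹' N ⊆ Function.invFunOn φ s '' (φ '' s ∩ N) := fun x hx =>
    ⟨φ x, ⟨⟨x, hx.1, rfl⟩, hx.2⟩, hinj.leftInvOn_invFunOn hx.1⟩
  refine measure_mono_null hsub (le_antisymm ?_ bot_le)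
  refine (hlip.hausdorffMeasure_image_le hd).trans ?_
  rw [measure_mono_null inter_subset_right hN, mul_zero]

lemma HasNTLimit.comp {f : Eucl n → ℂ} {φ : Eucl n → Eucl n} {K : ℝ} (hn : 2 ≤ n) (hK0 : 0 < K)
    (hmaps : MapsTo φ (uBall n) (uBall n)) (hsph : φ '' uSphere n = uSphere n)
    (hK : ∀ x ∈ closedBall (0 : Eucl n) 1, ∀ y ∈ closedBall (0 : Eucl n) 1,
      ‖φ x - φ y‖ ≤ K * ‖x - y‖ ∧ ‖x - y‖ ≤ K * ‖φ x - φ y‖)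
    {ζ : Eucl n} (hζ : ζ ∈ uSphere n) {L : ℂ} (h : HasNTLimit n f (φ ζ) L) :
    HasNTLimit n (fun x => f (φ x)) ζ L := by
  intro δ hδ
  have hreg := mapsTo_ntRegion hn hK0 hmaps hsph hK hζ hδ (le_max_left _ 2)
  refine (h (max (2 * K ^ 2 * δ) 2) (by simp)).comp
    (tendsto_nhdsWithin_iff.2 ⟨?_, ?_⟩)
  · rw [tendsto_iff_norm_sub_tendsto_zero]
    refine squeeze_zero' (g := fun x => K * ‖x - ζ‖) (Eventually.of_forall fun x => norm_nonneg _)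
      ?_ ?_
    · filter_upwards [self_mem_nhdsWithin] with x hx
      exact (hK x (ball_subset_closedBall hx.1) ζ (sphere_subset_closedBall hζ)).1
    · have : Continuous fun x : Eucl n => K * ‖x - ζ‖ := by fun_prop
      simpa using (this.tendsto ζ).mono_left nhdsWithin_le_nhds
  · filter_upwards [self_mem_nhdsWithin] with x hx
    exact hreg hx

end

/-- Lemma 2.2: If `1 < p ≤ ∞`, `f ∈ h^p(B)` and `φ ∈ Möb(B)`, then
`(f∘φ)` has a nontangential limit at `σ`-a.e. `ζ ∈ S` and `(f∘φ)*(ζ) = f*(φ(ζ))`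
for `σ`-a.e. `ζ ∈ S`. -/
theorem boundary_function_comp_mobius (n : ℕ) (hn : 2 ≤ n) (p : ℝ≥0∞) (hp : 1 < p)
    (f : Eucl n → ℂ) (hf : MemHp n p f)
    (φ : Eucl n → Eucl n) (hφ : IsMobiusBall n φ)
    (fstar : Eucl n → ℂ)
    (hfstar : ∀ᵐ ζ ∂(sphMeasure n), HasNTLimit n f ζ (fstar ζ)) :
    ∀ᵐ ζ ∂(sphMeasure n), HasNTLimit n (fun x => f (φ x)) ζ (fstar (φ ζ)) := by
  obtain ⟨hmaps, K, hK0, hK⟩ := hφ.exists_bilipschitz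
  have hsph := image_sphere hφ.2 hmaps hK
  have hmeas : MeasurableSet (uSphere n) := isClosed_sphere.measurableSet
  unfold sphMeasure at hfstar ⊢
  -- a zero normalizing constant gives the zero measure; otherwise it does not affect null sets
  by_cases hc : (Measure.hausdorffMeasure ((n : ℝ) - 1) (uSphere n))⁻¹ = 0
  · simp [hc]
  refine Measure.ae_smul_measure ?_ _
  replace hfstar := (Measure.ae_ennreal_smul_measure_iff hc).1 hfstar
  rw [ae_restrict_iff' hmeas, ae_iff] at hfstar ⊢
  have hd : (0 : ℝ) ≤ (n : ℝ) - 1 := by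
    have : (2 : ℝ) ≤ n := by exact_mod_cast hn
    linarith
  refine measure_mono_null ?_ (hausdorff_preimage_null (s := uSphere n) hd (fun x hx y hy =>
    (hK x (sphere_subset_closedBall hx) y (sphere_subset_closedBall hy)).2) hfstar)
  intro ζ hζ
  simp only [mem_ofPred_eq, Classical.not_imp] at hζ
  refine ⟨hζ.1, ?_⟩
  simp only [mem_preimage, mem_ofPred_eq, Classical.not_imp]
  exact ⟨hsph ▸ mem_image_of_mem φ hζ.1,
    fun h => hζ.2 (h.comp hn hK0 hφ.2.mapsTo hsph hK hζ.1)⟩
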